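/- Let n ≥ 3, q > 0, and let a_1, …, a_n be real numbers and α, β reals with a_1 − a_2 = a_2 − a_3 = … = a_{n−2} − a_{n−1} = α and a_{n−1} − a_n = β. Then for every x = (x_1,…,x_n) ∈ ℝ^n, a_1 (x_1^*)^q + … + a_n (x_n^*)^q = a_n (|x_1|^q + … + |x_n|^q) + β Σ_{1 ≤ i < j ≤ n} max(|x_i|,|x_j|)^q + (β − α) Σ_{k=3}^n (−1)^k Σ_{1 ≤ i_1 < … < i_k ≤ n} max(|x_{i_1}|, …, |x_{i_k}|)^q. -/

import Mathlib

/-!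
Write `y i = x_{i+1}^*`, so that `y` is antitone and nonnegative and `i` runs over `0, …, n - 1`.
A set `s` of indices has `max_{i ∈ s} y i = y (min s)`, and exactly `(n - 1 - i).choose k` sets of
size `k + 1` have minimum `i`. Hence, after reindexing by the sorting permutation, the sum of
`max^q` over sets of size `k + 1` equals `∑ i, (n - 1 - i).choose k * y i ^ q`
(`sum_powersetCard_maxAbsOn`). Both sides of the formula are thus linear in the `y i ^ q`.
With `m = n - 1 - i`, the coefficient on the right is
`a n + β * m + (β - α) * ∑_{k ≥ 3} (-1)^k * m.choose (k - 1)`; the alternating sum is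
`1 - m - [m = 0]` because the full alternating binomial sum vanishes unless `m = 0`
(`alternating_tail`). This equals `a (i + 1)`, which is `a n` for `m = 0` and
`a n + β + (m - 1) * α` otherwise (`coeff_eq`).
-/

/-- The non-increasing rearrangement of `(|x 0|, …, |x (n-1)|)`. -/
noncomputable def dstar {n : ℕ} (x : Fin n → ℝ) : Fin n → ℝ :=
  fun i => |x (Tuple.sort (fun j => -|x j|) i)|

/-- `max_{i ∈ s} |x i|` (with the convention `0` for `s = ∅`). -/
noncomputable def maxAbsOn {n : ℕ} (x : Fin n → ℝ) (s : Finset (Fin n)) : ℝ :=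
  s.fold max 0 (fun i => |x i|)

lemma dstar_antitone {n : ℕ} (x : Fin n → ℝ) : Antitone (dstar x) := by
  intro i j hij
  have := Tuple.monotone_sort (fun j => -|x j|) hij
  simpa [dstar] using this

lemma dstar_nonneg {n : ℕ} (x : Fin n → ℝ) (i : Fin n) : 0 ≤ dstar x i := abs_nonneg _

lemma maxAbsOn_map_sort {n : ℕ} (x : Fin n → ℝ) (s : Finset (Fin n)) :
    maxAbsOn x (s.map (Tuple.sort (fun j => -|x j|)).toEmbedding) = maxAbsOn (dstar x) s := by
  simp [maxAbsOn, Finset.fold_map, dstar, Function.comp_def]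

lemma maxAbsOn_insert_of_subset_Ioi {n : ℕ} {y : Fin n → ℝ} (hy : Antitone y)
    (hy0 : ∀ i, 0 ≤ y i) (i : Fin n) {t : Finset (Fin n)} (ht : t ⊆ Finset.Ioi i) :
    maxAbsOn y (insert i t) = y i := by
  have hi : i ∉ t := fun h => by simpa using ht h
  unfold maxAbsOn
  rw [Finset.fold_insert hi, abs_of_nonneg (hy0 i)]
  apply max_eq_left
  rw [Finset.fold_max_le]
  refine ⟨hy0 i, fun j hj => ?_⟩
  rw [abs_of_nonneg (hy0 j)]
  exact hy (Finset.mem_Ioi.mp (ht hj)).le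

/-- Sets of size `k + 1` are classified by their minimum `i` and the remaining `k` elements,
which form a subset of `Ioi i`. -/
lemma sum_powersetCard_succ {n : ℕ} (k : ℕ) (F : Finset (Fin n) → ℝ) :
    ∑ s ∈ Finset.powersetCard (k + 1) (Finset.univ : Finset (Fin n)), F s =
      ∑ i : Fin n, ∑ t ∈ Finset.powersetCard k (Finset.Ioi i), F (insert i t) := by
  rw [Finset.sum_sigma']
  symm
  refine Finset.sum_bij (fun p _ => insert p.1 p.2) ?_ ?_ ?_ (fun _ _ => rfl)
  · rintro ⟨i, t⟩ h
    simp only [Finset.mem_sigma, Finset.mem_univ, true_and, Finset.mem_powersetCard] at h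
    have hi : i ∉ t := fun hh => by simpa using h.1 hh
    simp [Finset.mem_powersetCard, Finset.card_insert_of_notMem hi, h.2]
  · rintro ⟨i, t⟩ h ⟨j, u⟩ h' heq
    simp only [Finset.mem_sigma, Finset.mem_univ, true_and, Finset.mem_powersetCard] at h h'
    have hi : ∀ l ∈ t, i < l := fun l hl => by simpa using h.1 hl
    have hj : ∀ l ∈ u, j < l := fun l hl => by simpa using h'.1 hl
    dsimp only at heq
    have hij : i = j := by
      have h1 : i ∈ insert j u := heq ▸ Finset.mem_insert_self i t
      have h2 : j ∈ insert i t := heq ▸ Finset.mem_insert_self j u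
      rcases Finset.mem_insert.mp h1 with h1 | h1
      · exact h1
      rcases Finset.mem_insert.mp h2 with h2 | h2
      · exact h2.symm
      exact absurd (hi _ h2) (hj _ h1).asymm
    subst hij
    have : t = u := by
      rw [← Finset.erase_insert (a := i) (s := t) (fun hh => lt_irrefl _ (hi _ hh)), heq,
        Finset.erase_insert (fun hh => lt_irrefl _ (hj _ hh))]
    rw [this]
  · intro s hs
    rw [Finset.mem_powersetCard] at hs
    have hne : s.Nonempty := Finset.card_pos.mp (by omega)
    refine ⟨⟨s.min' hne, s.erase (s.min' hne)⟩, ?_, Finset.insert_erase (s.min'_mem hne)⟩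
    simp only [Finset.mem_sigma, Finset.mem_univ, true_and, Finset.mem_powersetCard]
    refine ⟨fun l hl => Finset.mem_Ioi.mpr (s.min'_lt_of_mem_erase_min' hne hl), ?_⟩
    rw [Finset.card_erase_of_mem (s.min'_mem hne), hs.2]
    rfl

lemma sum_powersetCard_maxAbsOn {n : ℕ} (x : Fin n → ℝ) (q : ℝ) (k : ℕ) :
    ∑ s ∈ Finset.powersetCard (k + 1) (Finset.univ : Finset (Fin n)), maxAbsOn x s ^ q =
      ∑ i : Fin n, ((n - 1 - i.1).choose k : ℝ) * dstar x i ^ q := by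
  have h : Finset.powersetCard (k + 1) (Finset.univ : Finset (Fin n)) =
      (Finset.powersetCard (k + 1) Finset.univ).map
        (Finset.mapEmbedding (Tuple.sort (fun j => -|x j|)).toEmbedding).toEmbedding := by
    rw [← Finset.powersetCard_map, Finset.map_univ_equiv]
  rw [h, Finset.sum_map]
  simp only [RelEmbedding.coe_toEmbedding, Finset.mapEmbedding_apply, maxAbsOn_map_sort]
  rw [sum_powersetCard_succ]
  refine Finset.sum_congr rfl fun i _ => ?_
  rw [Finset.sum_congr rfl fun t ht => by
    rw [maxAbsOn_insert_of_subset_Ioi (dstar_antitone x) (dstar_nonneg x) i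
      (Finset.mem_powersetCard.mp ht).1]]
  simp [Finset.card_powersetCard, Fin.card_Ioi]

lemma sum_singles {n : ℕ} (x : Fin n → ℝ) (q : ℝ) :
    ∑ i : Fin n, |x i| ^ q = ∑ i : Fin n, dstar x i ^ q :=
  (Equiv.sum_comp (Tuple.sort (fun j => -|x j|)) (fun i => |x i| ^ q)).symm

lemma sum_pairs {n : ℕ} (x : Fin n → ℝ) (q : ℝ) :
    ∑ p ∈ Finset.univ.filter (fun p : Fin n × Fin n => p.1 < p.2), (max |x p.1| |x p.2|) ^ q =
      ∑ s ∈ Finset.powersetCard 2 (Finset.univ : Finset (Fin n)), maxAbsOn x s ^ q := by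
  rw [sum_powersetCard_succ, Finset.sum_filter, ← Finset.univ_product_univ, Finset.sum_product]
  refine Finset.sum_congr rfl fun i _ => ?_
  rw [← Finset.sum_filter, Finset.powersetCard_one, Finset.sum_map]
  refine Finset.sum_congr (by ext; simp) fun j hj => ?_
  have hij : i ≠ j := (Finset.mem_Ioi.mp hj).ne
  simp [maxAbsOn, Finset.fold_insert, hij]

lemma alternating_tail {n m : ℕ} (hn : 3 ≤ n) (hm : m < n) :
    ∑ k ∈ Finset.Icc 3 n, (-1 : ℝ) ^ k * (m.choose (k - 1) : ℝ) =
      1 - m - if m = 0 then 1 else 0 := by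
  obtain ⟨N, rfl⟩ := Nat.exists_eq_add_of_le' hn
  have h1 : ∑ j ∈ Finset.range (N + 3), (-1 : ℝ) ^ j * (m.choose j : ℝ) =
      if m = 0 then 1 else 0 := by
    have h := congrArg (Int.cast : ℤ → ℝ) (Int.alternating_sum_range_choose (n := m))
    push_cast at h
    rw [← h]
    symm
    refine Finset.sum_subset (Finset.range_subset_range.mpr hm) fun j _ hj => ?_
    rw [Nat.choose_eq_zero_of_lt (by simpa using hj)]
    simp
  rw [Finset.sum_range_succ', Finset.sum_range_succ'] at h1
  rw [← h1, ← Finset.Ico_succ_right_eq_Icc, Finset.sum_Ico_eq_sum_range]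
  have h2 : ∑ k ∈ Finset.range (N + 1), (-1 : ℝ) ^ (3 + k) * (m.choose (3 + k - 1) : ℝ) =
      -∑ k ∈ Finset.range (N + 1), (-1 : ℝ) ^ (k + 1 + 1) * (m.choose (k + 1 + 1) : ℝ) := by
    rw [← Finset.sum_neg_distrib]
    refine Finset.sum_congr rfl fun k _ => ?_
    rw [show 3 + k - 1 = k + 1 + 1 by omega]
    ring
  have h3 : Order.succ (N + 3) - 3 = N + 1 := by simp
  rw [h3, h2]
  simp
  ring

lemma coeff_eq {n : ℕ} {a : ℕ → ℝ} {α β : ℝ}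
    (hα : ∀ j, 1 ≤ j → j + 2 ≤ n → a j - a (j + 1) = α)
    (hβ : a (n - 1) - a n = β) (m : ℕ) (hm : m < n) :
    a (n - m) = a n + β * m + (β - α) * (1 - m - if m = 0 then 1 else 0) := by
  induction m with
  | zero => simp
  | succ m ih =>
    rcases Nat.eq_zero_or_pos m with rfl | hm0
    · simp; linarith
    · have h := hα (n - (m + 1)) (by omega) (by omega)
      rw [show n - (m + 1) + 1 = n - m by omega, ih (by omega), if_neg hm0.ne'] at h
      rw [if_neg m.succ_ne_zero]
      push_cast
      linarith

/-- Formula (10): if `a_1 − a_2 = … = a_{n−2} − a_{n−1} = α` and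
`a_{n−1} − a_n = β`, then
`∑ aₖ (xₖ^*)^q = a_n ∑ |xᵢ|^q + β ∑_{i<j} max(|xᵢ|,|xⱼ|)^q
  + (β − α) ∑_{k=3}^n (−1)^k ∑_{i₁<…<i_k} max(|x_{i₁}|,…,|x_{i_k}|)^q`. -/
theorem stmt11 (n : ℕ) (hn : 3 ≤ n) (q : ℝ) (hq : 0 < q)
    (a : ℕ → ℝ) (α β : ℝ)
    (hα : ∀ j, 1 ≤ j → j + 2 ≤ n → a j - a (j + 1) = α)
    (hβ : a (n - 1) - a n = β) (x : Fin n → ℝ) :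
    ∑ i : Fin n, a (i.1 + 1) * dstar x i ^ q =
      a n * (∑ i : Fin n, |x i| ^ q) +
      β * (∑ p ∈ Finset.univ.filter (fun p : Fin n × Fin n => p.1 < p.2),
            (max |x p.1| |x p.2|) ^ q) +
      (β - α) * ∑ k ∈ Finset.Icc 3 n, (-1 : ℝ) ^ k *
          ∑ s ∈ Finset.powersetCard k (Finset.univ : Finset (Fin n)),
            maxAbsOn x s ^ q := by
  have hk : ∑ k ∈ Finset.Icc 3 n, (-1 : ℝ) ^ k *
      ∑ s ∈ Finset.powersetCard k (Finset.univ : Finset (Fin n)), maxAbsOn x s ^ q =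
      ∑ i : Fin n, (∑ k ∈ Finset.Icc 3 n, (-1 : ℝ) ^ k * ((n - 1 - i.1).choose (k - 1) : ℝ)) *
        dstar x i ^ q := by
    simp only [Finset.sum_mul]
    rw [Finset.sum_comm]
    refine Finset.sum_congr rfl fun k hk => ?_
    obtain ⟨j, rfl⟩ := Nat.exists_eq_add_of_le' (show 1 ≤ k by
      have := (Finset.mem_Icc.mp hk).1
      omega)
    rw [sum_powersetCard_maxAbsOn, Finset.mul_sum]
    simp only [Nat.add_sub_cancel, mul_assoc]
  rw [hk, sum_pairs, sum_powersetCard_maxAbsOn, sum_singles, Finset.mul_sum, Finset.mul_sum,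
    Finset.mul_sum, ← Finset.sum_add_distrib, ← Finset.sum_add_distrib]
  refine Finset.sum_congr rfl fun i _ => ?_
  have hi := i.2
  have hm : n - 1 - i.1 < n := by omega
  rw [alternating_tail hn hm, Nat.choose_one_right,
    show i.1 + 1 = n - (n - 1 - i.1) by omega, coeff_eq hα hβ _ hm]
  ring
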